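/- For the exchangeable model λ(θ) = (e^{−(p−1)θ}, e^{θ}, …, e^{θ}) with R(θ) = Q D_{λ(θ)} Q*, one has det( I_p + R(θ) ∘ R(θ)^{−1} ) = 2 · ( (1/p)(2 sinh(pθ/2))² + 2 )^{p−1}, and the θ-component of the Fisher metric equals (1/2) ∑_{k=1}^p ( d log λ_k/dθ )² = p(p−1)/2. -/

import Mathlib

open Matrix Complex

/-- The determinant of `x I + c J`, where `J` is the all-ones matrix. -/
lemma det_smul_one_add_const {n K : Type*} [Fintype n] [DecidableEq n] [Nonempty n] [Field K]
    (x c : K) (hx : x ≠ 0) :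
    (x • (1 : Matrix n n K) + Matrix.of fun _ _ => c).det =
      (x + Fintype.card n * c) * x ^ (Fintype.card n - 1) := by
  have h : x • (1 : Matrix n n K) + Matrix.of (fun _ _ => c) =
      x • (1 + replicateCol Unit (fun _ : n => c / x) * replicateRow Unit fun _ : n => (1 : K)) := by
    ext i j
    simp [Matrix.mul_apply, mul_add, mul_div_cancel₀ _ hx]
  rw [h, det_smul, det_one_add_replicateCol_mul_replicateRow]
  obtain ⟨m, hm⟩ : ∃ m, Fintype.card n = m + 1 := ⟨_, (Nat.succ_pred Fintype.card_ne_zero).symm⟩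
  simp only [dotProduct, one_mul, Finset.sum_const, Finset.card_univ, hm, nsmul_eq_mul]
  push_cast
  rw [pow_succ]
  field_simp

/-- The normalized discrete Fourier transform matrix has orthonormal rows. -/
lemma fourier_mul_conjTranspose {p : ℕ} [NeZero p] {ω : ℂ} (hω : IsPrimitiveRoot ω p)
    {Q : Matrix (Fin p) (Fin p) ℂ}
    (hQ : ∀ j k : Fin p, Q j k = ω ^ ((j : ℕ) * (k : ℕ)) / Real.sqrt p) :
    Q * Qᴴ = 1 := by
  have hp : (p : ℂ) ≠ 0 := Nat.cast_ne_zero.2 (NeZero.ne p)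
  have hω0 : ω ≠ 0 := hω.ne_zero (NeZero.ne p)
  have hconj : star ω = ω⁻¹ := by
    rw [Complex.inv_eq_conj (hω.norm'_eq_one (NeZero.ne p))]; rfl
  have hsqrt : ((Real.sqrt p : ℝ) : ℂ) * (Real.sqrt p : ℝ) = p := by
    rw [← Complex.ofReal_mul, Real.mul_self_sqrt (Nat.cast_nonneg p), Complex.ofReal_natCast]
  ext j l
  have hterm : ∀ k : Fin p, Q j k * Qᴴ k l = (ω ^ (j : ℕ) / ω ^ (l : ℕ)) ^ (k : ℕ) / p := by
    intro k
    rw [conjTranspose_apply, hQ, hQ, star_div₀, star_pow, hconj, ← hsqrt,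
      show star ((Real.sqrt p : ℝ) : ℂ) = (Real.sqrt p : ℝ) from Complex.conj_ofReal _,
      div_mul_div_comm, div_pow, ← pow_mul, ← pow_mul, inv_pow, div_eq_mul_inv (ω ^ _)]
  rw [Matrix.mul_apply, Finset.sum_congr rfl fun k _ => hterm k, ← Finset.sum_div,
    Fin.sum_univ_eq_sum_range (fun k => (ω ^ (j : ℕ) / ω ^ (l : ℕ)) ^ k)]
  rcases eq_or_ne j l with rfl | hjl
  · simp [hω0, hp]
  · have hne : ω ^ (j : ℕ) / ω ^ (l : ℕ) ≠ 1 := fun h =>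
      hjl (Fin.ext (hω.pow_inj j.2 l.2 ((div_eq_one_iff_eq (pow_ne_zero _ hω0)).1 h)))
    rw [geom_sum_eq hne, div_pow, ← pow_mul, ← pow_mul, mul_comm (j : ℕ), mul_comm (l : ℕ),
      pow_mul, pow_mul, hω.pow_eq_one]
    simp [hjl]

/-- Conjugating `diag(a, b, …, b)` by the Fourier matrix gives `b I + ((a - b) / p) J`. -/
lemma fourier_mul_diagonal_mul_conjTranspose {p : ℕ} [NeZero p] {ω : ℂ}
    (hω : IsPrimitiveRoot ω p) {Q : Matrix (Fin p) (Fin p) ℂ}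
    (hQ : ∀ j k : Fin p, Q j k = ω ^ ((j : ℕ) * (k : ℕ)) / Real.sqrt p)
    {v : Fin p → ℂ} {a b : ℂ} (ha : v 0 = a) (hb : ∀ k, k ≠ 0 → v k = b) :
    Q * diagonal v * Qᴴ = b • (1 : Matrix (Fin p) (Fin p) ℂ) + Matrix.of fun _ _ => (a - b) / p := by
  have hsqrt : ((Real.sqrt p : ℝ) : ℂ) * (Real.sqrt p : ℝ) = p := by
    rw [← Complex.ofReal_mul, Real.mul_self_sqrt (Nat.cast_nonneg p), Complex.ofReal_natCast]
  have hv : diagonal v = b • (1 : Matrix (Fin p) (Fin p) ℂ) + (a - b) • Matrix.single 0 0 1 := by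
    rw [← diagonal_one, ← diagonal_smul, ← diagonal_single, ← diagonal_smul, diagonal_add]
    congr 1
    ext k
    rcases eq_or_ne k 0 with rfl | hk
    · simp [ha]
    · simp [hb k hk, hk]
  have hone : Q * Matrix.single 0 0 1 * Qᴴ = Matrix.of fun _ _ => (1 : ℂ) / p := by
    ext j l
    rw [Matrix.mul_apply, Finset.sum_eq_single 0]
    · simp [hQ, ← hsqrt]
    · intro k _ hk
      simp [hk]
    · simp
  rw [hv, mul_add, add_mul, Matrix.mul_smul, Matrix.mul_smul, Matrix.smul_mul, Matrix.smul_mul,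
    mul_one, fourier_mul_conjTranspose hω hQ, hone]
  congr 1
  ext j l
  simp [div_eq_mul_inv]

/-- The determinant of `I + R ∘ R⁻¹` for `R = Q diag(a, b, …, b) Q*`. -/
lemma det_one_add_hadamard_inv {p : ℕ} [NeZero p] {ω : ℂ}
    (hω : IsPrimitiveRoot ω p) {Q : Matrix (Fin p) (Fin p) ℂ}
    (hQ : ∀ j k : Fin p, Q j k = ω ^ ((j : ℕ) * (k : ℕ)) / Real.sqrt p)
    {v : Fin p → ℂ} {a b : ℂ} (hv0 : v 0 = a) (hvk : ∀ k, k ≠ 0 → v k = b)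
    (ha : a ≠ 0) (hb : b ≠ 0) (hx : 1 / p * (b / a + a / b - 2) + 2 ≠ 0) :
    (1 + Matrix.hadamard (Q * diagonal v * Qᴴ) (Q * diagonal v * Qᴴ)⁻¹).det =
      2 * (1 / p * (b / a + a / b - 2) + 2) ^ (p - 1) := by
  have hp : (p : ℂ) ≠ 0 := Nat.cast_ne_zero.2 (NeZero.ne p)
  have hQQ := fourier_mul_conjTranspose hω hQ
  have hQQ' : Qᴴ * Q = 1 := mul_eq_one_comm.1 hQQ
  have hv : ∀ k, v k ≠ 0 := fun k => by
    rcases eq_or_ne k 0 with rfl | hk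
    · rwa [hv0]
    · rwa [hvk k hk]
  have hinv : (Q * diagonal v * Qᴴ)⁻¹ = Q * diagonal (fun k => (v k)⁻¹) * Qᴴ := by
    apply inv_eq_right_inv
    have hd : diagonal v * diagonal (fun k => (v k)⁻¹) = 1 := by
      simp [diagonal_mul_diagonal, hv]
    calc Q * diagonal v * Qᴴ * (Q * diagonal (fun k => (v k)⁻¹) * Qᴴ)
        = Q * diagonal v * (Qᴴ * Q) * diagonal (fun k => (v k)⁻¹) * Qᴴ := by
          simp only [Matrix.mul_assoc]
      _ = 1 := by rw [hQQ', Matrix.mul_one, Matrix.mul_assoc Q, hd, Matrix.mul_one, hQQ]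
  have hH : 1 + Matrix.hadamard (Q * diagonal v * Qᴴ) (Q * diagonal v * Qᴴ)⁻¹ =
      (1 / p * (b / a + a / b - 2) + 2) • (1 : Matrix (Fin p) (Fin p) ℂ) +
        Matrix.of fun _ _ => (a - b) / p * ((a⁻¹ - b⁻¹) / p) := by
    rw [hinv, fourier_mul_diagonal_mul_conjTranspose hω hQ hv0 hvk,
      fourier_mul_diagonal_mul_conjTranspose hω hQ (v := fun k => (v k)⁻¹) (a := a⁻¹) (b := b⁻¹)
        (by rw [hv0]) (fun k hk => by rw [hvk k hk])]
    ext j l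
    rcases eq_or_ne j l with rfl | hjl
    · simp only [Matrix.add_apply, hadamard_apply, Matrix.smul_apply, one_apply_eq, of_apply, smul_eq_mul]
      field_simp
      ring
    · simp [hjl]
  rw [hH, det_smul_one_add_const _ _ hx, Fintype.card_fin]
  congr 1
  field_simp
  ring

/-- Exchangeable model `λ(θ) = (e^{-(p-1)θ}, e^θ, …, e^θ)`:
`det(I_p + R(θ) ∘ R(θ)⁻¹) = 2((1/p)(2 sinh(pθ/2))² + 2)^{p-1}` and the
`θ`-component of the Fisher metric is
`(1/2) ∑_k (d log λ_k/dθ)² = p(p-1)/2`. -/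
theorem stmt_16 (p : ℕ) (hp : 2 ≤ p) [NeZero p]
    (ω : ℂ) (hω : ω = Complex.exp (2 * Real.pi * Complex.I / p))
    (Q : Matrix (Fin p) (Fin p) ℂ)
    (hQ : ∀ j k : Fin p, Q j k = ω ^ ((j : ℕ) * (k : ℕ)) / Real.sqrt p)
    (lam : ℝ → Fin p → ℝ)
    (hlam0 : ∀ t, lam t 0 = Real.exp (-((p : ℝ) - 1) * t))
    (hlamk : ∀ t (k : Fin p), k ≠ 0 → lam t k = Real.exp t)
    (R : ℝ → Matrix (Fin p) (Fin p) ℂ)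
    (hR : ∀ t, R t = Q * Matrix.diagonal (fun k => (lam t k : ℂ)) * Qᴴ)
    (θ : ℝ) :
    (1 + Matrix.hadamard (R θ) (R θ)⁻¹).det =
      ((2 * ((1 / p) * (2 * Real.sinh ((p : ℝ) * θ / 2)) ^ 2 + 2) ^ (p - 1) : ℝ) : ℂ) ∧
    (1 / 2 : ℝ) * ∑ k : Fin p, (deriv (fun t => Real.log (lam t k)) θ) ^ 2 =
      (p : ℝ) * ((p : ℝ) - 1) / 2 := by
  have hp0 : p ≠ 0 := by omega
  have hprim : IsPrimitiveRoot ω p := hω ▸ Complex.isPrimitiveRoot_exp p hp0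
  constructor
  · have hs : Real.exp θ / Real.exp (-((p : ℝ) - 1) * θ) +
        Real.exp (-((p : ℝ) - 1) * θ) / Real.exp θ - 2 =
        (2 * Real.sinh ((p : ℝ) * θ / 2)) ^ 2 := by
      rw [← Real.exp_sub, ← Real.exp_sub, Real.sinh_eq, mul_div_cancel₀ _ two_ne_zero, sub_sq,
        mul_assoc, ← Real.exp_add, ← Real.exp_nat_mul, ← Real.exp_nat_mul, add_neg_cancel,
        Real.exp_zero, show θ - -((p : ℝ) - 1) * θ = (2 : ℕ) * ((p : ℝ) * θ / 2) by push_cast; ring,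
        show -((p : ℝ) - 1) * θ - θ = (2 : ℕ) * -((p : ℝ) * θ / 2) by push_cast; ring]
      ring
    have hpos : 0 < 1 / (p : ℝ) * (2 * Real.sinh ((p : ℝ) * θ / 2)) ^ 2 + 2 := by positivity
    have ha : Real.exp (-((p : ℝ) - 1) * θ) ≠ 0 := (Real.exp_pos _).ne'
    have hb : Real.exp θ ≠ 0 := (Real.exp_pos _).ne'
    have hl0 := hlam0 θ
    have hlk := hlamk θ
    rw [← hs] at hpos ⊢
    generalize Real.exp (-((p : ℝ) - 1) * θ) = a at *
    generalize Real.exp θ = b at *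
    have hcast : (1 / p * (b / a + a / b - 2) + 2 : ℂ) =
        ((1 / p * (b / a + a / b - 2) + 2 : ℝ) : ℂ) := by push_cast; rfl
    rw [hR, det_one_add_hadamard_inv hprim hQ (a := a) (b := b) (by rw [hl0])
      (fun k hk => by rw [hlk k hk]) (Complex.ofReal_ne_zero.2 ha) (Complex.ofReal_ne_zero.2 hb)
      (hcast ▸ Complex.ofReal_ne_zero.2 hpos.ne'), hcast]
    push_cast
    rfl
  · have h0 : deriv (fun t => Real.log (lam t 0)) θ = -((p : ℝ) - 1) := by
      simp only [hlam0, Real.log_exp]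
      simp
    have hk : ∀ k : Fin p, k ≠ 0 → deriv (fun t => Real.log (lam t k)) θ = 1 := fun k hk => by
      simp only [hlamk _ k hk, Real.log_exp]
      exact deriv_id θ
    rw [← Finset.add_sum_erase _ _ (Finset.mem_univ 0), h0,
      Finset.sum_congr rfl fun k hmem => by rw [hk k (Finset.ne_of_mem_erase hmem), one_pow]]
    simp only [Finset.sum_const, Finset.card_erase_of_mem (Finset.mem_univ _), Finset.card_univ,
      Fintype.card_fin, nsmul_eq_mul, mul_one]
    rw [Nat.cast_sub (by omega), Nat.cast_one]
    ring
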